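/- The sequence {A_n}_{n≥0} of Apéry numbers is ratio log-concave; that is, for every integer n ≥ 2, (A_n/A_{n−1})^2 ≥ (A_{n−1}/A_{n−2})(A_{n+1}/A_n). -/

import Mathlib

/-!
With `r n = A n / A (n - 1)`, `q n = 34 n³ - 51 n² + 27 n - 5` and `X = n³ * r n`, the recurrence
gives `(n - 1)³ / r (n - 1) = q n - X` and `(n + 1)³ * r (n + 1) = q (n + 1) - n³ / r n`.
So the inequality `r (n - 1) * r (n + 1) ≤ r n ^ 2` only involves `n` and `X`; after clearing
denominators it reads `0 ≤ G n X`, where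
`G n X = X³ (q n - X) (n + 1)³ - (n - 1)³ (q (n + 1) X n⁶ - n¹²)`.

In the range `q n - n³ ≤ X`, which holds because `A` is increasing, `G n X / X` decreases in `X`
(`gap_nonneg_of_le`). It therefore suffices to have an upper bound `X ≤ P n` with `0 ≤ G n (P n)`.
For `P` one takes the cubic polynomial in `n` (`cubicBound`) that agrees with the asymptotic
expansion of `n³ * r n`, namely `(17 + 12 √2) (n³ - 3/2 n² + c₂ n + c₃)` with
`c₂ = 9/8 - 15 √2 / 64` and `c₃ = -165/256 + 45 √2 / 128`. This precision is needed, since the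
logarithm of `r n ^ 2 / (r (n - 1) * r (n + 1))` has order `n⁻³`. For this `P`, both the
induction step for `n³ * r n ≤ P n` (`cubicBound_step`) and `0 ≤ G n (P n)`
(`gap_cubicBound_nonneg`) become, after a shift of the variable, statements about polynomials with
nonnegative coefficients.
-/

/-- The coefficient polynomial `34 n³ - 51 n² + 27 n - 5` of the Apéry recurrence. -/
def aperyCoeff (n : ℝ) : ℝ := 34 * n ^ 3 - 51 * n ^ 2 + 27 * n - 5

/-- The cubic upper bound for `n³ * A n / A (n - 1)`: the polynomial part of its asymptotic
expansion at infinity. -/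
noncomputable def cubicBound (n : ℝ) : ℝ :=
  (4352 * n ^ 3 - 6528 * n ^ 2 + 3456 * n - 645
    + (3072 * n ^ 3 - 4608 * n ^ 2 + 2436 * n - 450) * √2) / 256

/-- The ratio log-concavity defect at `n`, with denominators cleared, as a function of
`X = n³ * A n / A (n - 1)`. -/
def gap (n X : ℝ) : ℝ :=
  X ^ 3 * (aperyCoeff n - X) * (n + 1) ^ 3
    - (n - 1) ^ 3 * (aperyCoeff (n + 1) * X * n ^ 6 - n ^ 12)

lemma gap_cubicBound_nonneg (m : ℝ) (hm : 0 ≤ m) : 0 ≤ gap (m + 2) (cubicBound (m + 2)) := by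
  have hs : √2 ^ 2 = (2 : ℝ) := Real.sq_sqrt (by norm_num)
  have hs0 : 0 ≤ √(2 : ℝ) := Real.sqrt_nonneg _
  unfold gap cubicBound aperyCoeff
  generalize √(2 : ℝ) = s at *
  -- `x + y s` is `256 * cubicBound (m + 2)`, split into its rational and irrational parts.
  obtain ⟨x, hx⟩ : ∃ x, x = 4352 * m ^ 3 + 19584 * m ^ 2 + 29568 * m + 14971 := ⟨_, rfl⟩
  obtain ⟨y, hy⟩ : ∃ y, y = 3072 * m ^ 3 + 13824 * m ^ 2 + 20868 * m + 10566 := ⟨_, rfl⟩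
  have key : 0 ≤ ((5300717377072965 + 3747264502407336 * s) +
      (37747732626751365 + 26685481645506072 * s) * m +
      (122734034327762967 + 86767139082588840 * s) * m ^ 2 +
      (240881473381328799 + 170294703340243272 * s) * m ^ 3 +
      (317760235368695040 + 224649711006186576 * s) * m ^ 4 +
      (296745933234580032 + 209797578432463104 * s) * m ^ 5 +
      (201111058338835968 + 142187541358318080 * s) * m ^ 6 +
      (99634220467313664 + 70444043708639232 * s) * m ^ 7 +
      (35800234404593664 + 25312312186896384 * s) * m ^ 8 +
      (9095533915275264 + 6431084393201664 * s) * m ^ 9 +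
      (1550380500516864 + 1096236128010240 * s) * m ^ 10 +
      (159130551582720 + 112519771324416 * s) * m ^ 11 +
      (7434588389376 + 5257039970304 * s) * m ^ 12) / 256 ^ 4 := by positivity
  refine key.trans_eq ?_
  -- The factor of `s² - 2` below is the quotient left when the powers `s³`, `s⁴` in
  -- `(x + y s)³` and `(x + y s)⁴` are reduced.
  have hred : ∀ Q C : ℝ, (x + y * s) ^ 3 * (256 * Q - (x + y * s)) * C
      = ((x ^ 3 + 6 * x * y ^ 2 + (3 * x ^ 2 * y + 2 * y ^ 3) * s) * (256 * Q)
        - (x ^ 4 + 12 * x ^ 2 * y ^ 2 + 4 * y ^ 4 + (4 * x ^ 3 * y + 8 * x * y ^ 3) * s)) * C := by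
    intro Q C
    linear_combination ((3 * x * y ^ 2 + y ^ 3 * s) * (256 * Q)
      - (6 * x ^ 2 * y ^ 2 + 4 * x * y ^ 3 * s + y ^ 4 * (s ^ 2 + 2))) * C * hs
  have hP : 4352 * (m + 2) ^ 3 - 6528 * (m + 2) ^ 2 + 3456 * (m + 2) - 645
      + (3072 * (m + 2) ^ 3 - 4608 * (m + 2) ^ 2 + 2436 * (m + 2) - 450) * s = x + y * s := by
    rw [hx, hy]; ring
  rw [hP]
  have h := hred (34 * (m + 2) ^ 3 - 51 * (m + 2) ^ 2 + 27 * (m + 2) - 5) ((m + 2 + 1) ^ 3)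
  rw [hx, hy] at h ⊢
  linear_combination (-1 / 256 ^ 4) * h

/-- If `r (n - 1)` obeys the cubic bound, so does `r n`. -/
lemma cubicBound_step (n : ℝ) (hn : 3 ≤ n) :
    aperyCoeff n * cubicBound (n - 1) - (n - 1) ^ 6 ≤ cubicBound n * cubicBound (n - 1) := by
  obtain ⟨m, hm, rfl⟩ : ∃ m : ℝ, 0 ≤ m ∧ n = m + 3 := ⟨n - 3, by linarith, by ring⟩
  have hs : √2 ^ 2 = (2 : ℝ) := Real.sq_sqrt (by norm_num)
  have hs0 : 0 ≤ √(2 : ℝ) := Real.sqrt_nonneg _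
  unfold cubicBound aperyCoeff
  generalize √(2 : ℝ) = s at *
  have hs2 : s ≤ 2 := by nlinarith
  have h0 : 0 ≤ 214929 - 64080 * s := by linarith
  have h1 : 0 ≤ 203904 - 32040 * s := by linarith
  have key : 0 ≤ ((214929 - 64080 * s) + (203904 - 32040 * s) * m + 50976 * m ^ 2) / 256 ^ 2 := by
    positivity
  rw [← sub_nonneg]
  refine key.trans_eq ?_
  linear_combination (-1 / 256 ^ 2) *
    (3072 * (m + 3) ^ 3 - 4608 * (m + 3) ^ 2 + 2436 * (m + 3) - 450) *
    (3072 * (m + 2) ^ 3 - 4608 * (m + 2) ^ 2 + 2436 * (m + 2) - 450) * hs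

/-- `gap n X / X` decreases in `X` on the relevant range, so its sign may be tested at an upper
bound `P` of `X`. -/
lemma gap_nonneg_of_le {n X P : ℝ} (hn : 2 ≤ n) (hX : aperyCoeff n - n ^ 3 ≤ X) (hXP : X ≤ P)
    (hP : 0 ≤ gap n P) : 0 ≤ gap n X := by
  have hN : 0 < n ^ 3 := by positivity
  have hq : 3 * n ^ 3 ≤ aperyCoeff n := by
    unfold aperyCoeff
    nlinarith [mul_nonneg (sq_nonneg n) (sub_nonneg.2 hn), mul_nonneg (by linarith : 0 ≤ n) (sub_nonneg.2 hn)]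
  have hX2 : 2 * n ^ 3 ≤ X := by linarith
  have hX0 : 0 < X := by linarith
  have hP0 : 0 < P := by linarith
  have hbr : 0 ≤ P * (P - aperyCoeff n) + X * (X - aperyCoeff n) + P * X := by
    nlinarith [mul_nonneg hP0.le (by linarith : 0 ≤ P - aperyCoeff n + n ^ 3),
      mul_nonneg hX0.le (by linarith : 0 ≤ X - aperyCoeff n + n ^ 3),
      mul_nonneg hP0.le (by linarith : 0 ≤ X - 2 * n ^ 3),
      mul_nonneg hX0.le (by linarith : 0 ≤ P - 2 * n ^ 3)]
  have hd : 0 ≤ P - X := by linarith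
  have hn1 : 0 ≤ n - 1 := by linarith
  have hn2 : 0 ≤ n + 1 := by linarith
  have h1 : 0 ≤ (n + 1) ^ 3 * X * P * ((P - X) *
      (P * (P - aperyCoeff n) + X * (X - aperyCoeff n) + P * X)) := by positivity
  have h2 : 0 ≤ (n - 1) ^ 3 * n ^ 12 * (P - X) := by positivity
  have h3 : P * gap n X = X * gap n P
      + (n + 1) ^ 3 * X * P * ((P - X) *
        (P * (P - aperyCoeff n) + X * (X - aperyCoeff n) + P * X))
      + (n - 1) ^ 3 * n ^ 12 * (P - X) := by
    unfold gap; ring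
  have h4 : 0 ≤ P * gap n X := by
    rw [h3]; have := mul_nonneg hX0.le hP; linarith
  exact nonneg_of_mul_nonneg_right h4 hP0

/-- The ratio inequality for four consecutive terms `a, b, c, d` of the recurrence, where
`c = A n`. -/
lemma ratio_of_gap {n a b c d : ℝ} (hn : 2 ≤ n) (ha : 0 < a) (hb : 0 < b) (hc : 0 < c)
    (h1 : n ^ 3 * c = aperyCoeff n * b - (n - 1) ^ 3 * a)
    (h2 : (n + 1) ^ 3 * d = aperyCoeff (n + 1) * c - n ^ 3 * b)
    (hg : 0 ≤ gap n (n ^ 3 * (c / b))) : (b / a) * (d / c) ≤ (c / b) ^ 2 := by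
  have hn1 : 0 < n - 1 := by linarith
  have hn2 : 0 < n + 1 := by linarith
  have hn0 : 0 < n := by linarith
  have hgap : gap n (n ^ 3 * (c / b)) * b ^ 4
      = n ^ 9 * (n - 1) ^ 3 * (n + 1) ^ 3 * (c ^ 3 * a - b ^ 3 * d) := by
    obtain ⟨r, hr⟩ : ∃ r, r = c / b := ⟨_, rfl⟩
    have hcr : c = r * b := by rw [hr]; field_simp
    rw [← hr]
    subst hcr
    unfold gap
    linear_combination (n ^ 9 * (n + 1) ^ 3 * r ^ 3 * b ^ 3) * (-h1)
      + (n ^ 9 * (n - 1) ^ 3 * b ^ 3) * h2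
  have h3 : 0 ≤ c ^ 3 * a - b ^ 3 * d := by
    have h4 := mul_nonneg hg (by positivity : 0 ≤ b ^ 4)
    rw [hgap] at h4
    exact nonneg_of_mul_nonneg_right h4 (by positivity)
  rw [div_mul_div_comm, div_pow, div_le_div_iff₀ (by positivity) (by positivity)]
  linarith

/-- The sequence `{A_n}_{n ≥ 0}` of Apéry numbers is ratio log-concave. -/
theorem stmt_3 (A : ℕ → ℝ) (hA0 : A 0 = 1) (hA1 : A 1 = 5)
    (hrec : ∀ n : ℕ, 2 ≤ n →
      (n : ℝ) ^ 3 * A n =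
        (34 * (n : ℝ) ^ 3 - 51 * (n : ℝ) ^ 2 + 27 * (n : ℝ) - 5) * A (n - 1)
          - ((n : ℝ) - 1) ^ 3 * A (n - 2)) :
    ∀ n : ℕ, 2 ≤ n →
      (A (n - 1) / A (n - 2)) * (A (n + 1) / A n) ≤ (A n / A (n - 1)) ^ 2 := by
  have rec' : ∀ m : ℕ, ((m : ℝ) + 2) ^ 3 * A (m + 2)
      = aperyCoeff (m + 2) * A (m + 1) - ((m : ℝ) + 2 - 1) ^ 3 * A m := by
    intro m
    have h := hrec (m + 2) (by omega)
    rw [show m + 2 - 1 = m + 1 by omega, show m + 2 - 2 = m by omega] at h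
    push_cast at h
    exact h
  -- If `A m ≤ A (m + 1)`, the recurrence gives `r (m + 2) ≥ q / n³ - 1` with `n = m + 2`.
  have lower : ∀ m : ℕ, 0 ≤ A (m + 1) → A m ≤ A (m + 1) →
      (aperyCoeff (m + 2) - ((m : ℝ) + 2) ^ 3) * A (m + 1) ≤ ((m : ℝ) + 2) ^ 3 * A (m + 2) := by
    intro m h1 h
    have hm : (0 : ℝ) ≤ m := m.cast_nonneg
    have hc : (0 : ℝ) ≤ ((m : ℝ) + 2) ^ 3 - (m + 2 - 1) ^ 3 := by
      ring_nf; positivity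
    rw [rec' m]
    nlinarith [mul_nonneg hc h1,
      mul_nonneg (by ring_nf; positivity : (0 : ℝ) ≤ ((m : ℝ) + 2 - 1) ^ 3) (sub_nonneg.2 h)]
  have incr : ∀ m : ℕ, 0 < A m ∧ A m ≤ A (m + 1) := by
    intro m
    induction m with
    | zero => rw [hA0, hA1]; norm_num
    | succ k ih =>
      obtain ⟨h0, h1⟩ := ih
      have hpos : 0 < A (k + 1) := h0.trans_le h1
      have hk : (0 : ℝ) ≤ k := k.cast_nonneg
      have hq : (0 : ℝ) ≤ aperyCoeff (k + 2) - (k + 2) ^ 3 - (k + 2) ^ 3 := by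
        unfold aperyCoeff; ring_nf; positivity
      refine ⟨hpos, ?_⟩
      have h2 := lower k hpos.le h1
      have h3 := mul_nonneg hq hpos.le
      have h4 : (0 : ℝ) < ((k : ℝ) + 2) ^ 3 := by positivity
      exact le_of_mul_le_mul_left (by linarith) h4
  have upper : ∀ m : ℕ,
      ((m : ℝ) + 2) ^ 3 * A (m + 2) ≤ cubicBound (m + 2) * A (m + 1) := by
    intro m
    induction m with
    | zero =>
      have h := rec' 0
      have hs : (1.414 : ℝ) ≤ √2 := Real.le_sqrt_of_sq_le (by norm_num)
      rw [h]
      simp only [Nat.cast_zero, zero_add, hA0, hA1]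
      unfold aperyCoeff cubicBound
      linarith
    | succ k ih =>
      have hk : (0 : ℝ) ≤ k := k.cast_nonneg
      have h := rec' (k + 1)
      have hstep := cubicBound_step ((k : ℝ) + 3) (by linarith)
      rw [show (k : ℝ) + 3 - 1 = k + 2 by ring] at hstep
      push_cast at h ⊢
      rw [show (k : ℝ) + 1 + 2 = k + 3 by ring] at h ⊢
      rw [show (k : ℝ) + 3 - 1 = k + 2 by ring] at h
      rw [show k + 1 + 2 = k + 3 by ring, show k + 1 + 1 = k + 2 by ring] at *
      have hpos1 := (incr (k + 1)).1
      have hpos2 := (incr (k + 2)).1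
      have hN : (0 : ℝ) < ((k : ℝ) + 2) ^ 3 := by positivity
      have hP : 0 < cubicBound ((k : ℝ) + 2) :=
        pos_of_mul_pos_left ((mul_pos hN hpos2).trans_le ih) hpos1.le
      refine le_of_mul_le_mul_left ?_ hP
      rw [h]
      nlinarith [mul_le_mul_of_nonneg_left ih hN.le, mul_le_mul_of_nonneg_right hstep hpos2.le]
  intro n hn
  obtain ⟨m, rfl⟩ : ∃ m, n = m + 2 := ⟨n - 2, by omega⟩
  rw [show m + 2 - 1 = m + 1 by omega, show m + 2 - 2 = m by omega]
  have hm : (0 : ℝ) ≤ m := m.cast_nonneg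
  have hb := (incr (m + 1)).1
  have h2 := rec' (m + 1)
  push_cast at h2
  rw [show (m : ℝ) + 1 + 2 = m + 2 + 1 by ring, show (m : ℝ) + 2 + 1 - 1 = m + 2 by ring] at h2
  refine ratio_of_gap (n := (m : ℝ) + 2) (by linarith) (incr m).1 hb (incr (m + 2)).1 (rec' m) h2 ?_
  refine gap_nonneg_of_le (P := cubicBound (m + 2)) (by linarith) ?_ ?_
    (gap_cubicBound_nonneg m hm)
  · rw [← mul_div_assoc, le_div_iff₀ hb]
    exact lower m hb.le (incr m).2
  · rw [← mul_div_assoc, div_le_iff₀ hb]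
    exact upper m
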